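/- The set of zeros of the entire function f₁(s) in the right half-plane Re(s) > 1/3 is finite. In particular, the set of zeros of f₁ with Re(s) ≥ 1/2 is finite. -/

import Mathlib

open Complex

noncomputable def chi (s : ℂ) : ℂ := s * (s - 1) * completedRiemannZeta₀ s + 1

noncomputable def A : ℂ := Real.pi / 3 - 1

noncomputable def f1 (s : ℂ) : ℂ :=
  (s - 1) * ((s - 1) * (3 * s - 2) * (A * s - A + 1) * chi (s + 1) * chi (3 * s)
    - (s + 1) * (s - 2) * chi s * chi (3 * s - 1)
    - 2 * (s - 1) * (s - 2) * chi s * chi (3 * s))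

noncomputable def f2 (s : ℂ) : ℂ :=
  (s - 2) * ((A * s + 3) * (s - 1) ^ 2 * chi (s + 2)
    - 2 * (s - 1) * (s - 3) * chi (s + 1)
    - (s + 2) * (s - 3) * chi s)

noncomputable def Z1 (s : ℂ) : ℂ := chi (2 * s) * f1 s - chi (2 * s - 1) * f1 (1 - s)

noncomputable def Z2 (s : ℂ) : ℂ := chi (2 * s) * f2 s - chi (2 * s - 1) * f2 (1 - s)

/-!
The heart of the matter is the inequality `‖χ(w - 1)‖ ≤ M ‖χ(w)‖` on `Re w ≥ 1`. For real
`a > 1/2` consider `χ(z - a) / χ(z + a)` on `Re z ≥ 1/2`. The functional equation and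
`χ(conj s) = conj χ(s)` make its modulus equal to `1` on the line `Re z = 1/2`, while for
`Re z ≥ 4 + a` it is at most `π ^ a ζ(2) ^ 2` because `|Γ(x + iy)|` increases with `x ≥ 2`. In the
strip in between it grows at most exponentially: `z + a` stays away from the line `Re = 1`, so
`1 / ζ(z + a)` is bounded, and `1 / Γ` is at most exponential. The Phragmén–Lindelöf principle
therefore gives the bound on the whole half-plane, and letting `a → 1/2` and writing
`z = w - 1/2` gives the inequality.

At a zero of `f₁` with `Re s ≥ 1/3` it applies to `w = s + 1` and `w = 3 s`. After dividing by
`χ(s + 1) χ(3 s)` the first summand of `f₁` is cubic in `s`, since `A ≠ 0`, and the other two are at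
most quadratic, so the zeros are bounded, hence finite in number.
-/

open scoped Real Topology ComplexConjugate

/-! ### The Riemann zeta function to the right of the critical strip -/

lemma norm_LSeries_le_norm_riemannZeta {a : ℕ → ℂ} (ha : ∀ n, ‖a n‖ ≤ 1) {x : ℝ} {w : ℂ}
    (hx : 1 < x) (hxw : x ≤ w.re) : ‖LSeries a w‖ ≤ ‖riemannZeta x‖ := by
  have hx' : 1 < (x : ℂ).re := by simpa using hx
  have hterm (n : ℕ) : LSeries.term 1 x n = (‖LSeries.term 1 x n‖ : ℝ) := by
    rcases eq_or_ne n 0 with rfl | hn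
    · simp
    · rw [LSeries.norm_term_eq, LSeries.term_of_ne_zero hn, if_neg hn]
      push_cast [Complex.ofReal_cpow n.cast_nonneg]
      simp
  have hzeta : ‖riemannZeta x‖ = ∑' n, ‖LSeries.term 1 x n‖ := by
    rw [← LSeries_one_eq_riemannZeta hx', LSeries, tsum_congr hterm, ← Complex.ofReal_tsum,
      Complex.norm_of_nonneg (tsum_nonneg fun n ↦ norm_nonneg _)]
  rw [hzeta]
  refine tsum_of_norm_bounded (LSeriesSummable_one_iff.mpr hx').norm.hasSum fun n ↦ ?_
  calc ‖LSeries.term a w n‖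
      ≤ ‖LSeries.term 1 w n‖ := LSeries.norm_term_le w (by simpa using ha n)
    _ ≤ ‖LSeries.term 1 x n‖ := LSeries.norm_term_le_of_re_le_re 1 (by simpa using hxw) n

lemma norm_riemannZeta_le_norm_riemannZeta {x : ℝ} {w : ℂ} (hx : 1 < x) (hxw : x ≤ w.re) :
    ‖riemannZeta w‖ ≤ ‖riemannZeta x‖ := by
  rw [← LSeries_one_eq_riemannZeta (hx.trans_le hxw)]
  exact norm_LSeries_le_norm_riemannZeta (by simp) hx hxw

lemma one_le_norm_riemannZeta_mul {x : ℝ} {w : ℂ} (hx : 1 < x) (hxw : x ≤ w.re) :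
    1 ≤ ‖riemannZeta x‖ * ‖riemannZeta w‖ := by
  have hinv := LSeries_one_mul_Lseries_moebius (hx.trans_le hxw)
  rw [LSeries_one_eq_riemannZeta (hx.trans_le hxw)] at hinv
  have hmoebius (n : ℕ) : ‖((ArithmeticFunction.moebius n : ℤ) : ℂ)‖ ≤ 1 := by
    rw [Complex.norm_intCast]
    exact_mod_cast ArithmeticFunction.abs_moebius_le_one
  calc (1 : ℝ) = ‖riemannZeta w‖ * ‖LSeries (fun n ↦ (ArithmeticFunction.moebius n : ℂ)) w‖ := by
        rw [← norm_mul, hinv, norm_one]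
    _ ≤ ‖riemannZeta w‖ * ‖riemannZeta x‖ := by
        gcongr
        exact norm_LSeries_le_norm_riemannZeta hmoebius hx hxw
    _ = ‖riemannZeta x‖ * ‖riemannZeta w‖ := mul_comm _ _

/-! ### The Gamma function on vertical lines -/

lemma norm_betaIntegral_le {u v : ℂ} (hu : 0 < u.re) (hv : 0 < v.re) :
    ‖betaIntegral u v‖ ≤ ProbabilityTheory.beta u.re v.re := by
  have hint := betaIntegral_convergent (u := u.re) (v := v.re) (by simpa) (by simpa)
  rw [ProbabilityTheory.beta_eq_betaIntegralReal _ _ hu hv, betaIntegral, betaIntegral,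
    ← Complex.reCLM_apply, ← Complex.reCLM.intervalIntegral_comp_comm hint]
  refine intervalIntegral.norm_integral_le_of_norm_le zero_le_one ?_
    ⟨Complex.reCLM.integrable_comp hint.1, Complex.reCLM.integrable_comp hint.2⟩
  filter_upwards [MeasureTheory.Measure.ae_ne MeasureTheory.volume 1] with x hx_ne hx
  have hx' : 0 < 1 - x := sub_pos.mpr (lt_of_le_of_ne hx.2 hx_ne)
  rw [Complex.reCLM_apply, norm_mul, ← Complex.ofReal_one, ← Complex.ofReal_sub,
    Complex.norm_cpow_eq_rpow_re_of_pos hx.1, Complex.norm_cpow_eq_rpow_re_of_pos hx',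
    ← Complex.ofReal_sub, ← Complex.ofReal_sub, ← Complex.ofReal_cpow hx.1.le,
    ← Complex.ofReal_cpow hx'.le, ← Complex.ofReal_mul, Complex.ofReal_re]
  simp

lemma norm_Gamma_mul_Gamma_re_add_le {z : ℂ} {b : ℝ} (hz : 0 < z.re) (hb : 0 ≤ b) :
    ‖Gamma z‖ * Real.Gamma (z.re + b) ≤ Real.Gamma z.re * ‖Gamma (z + b)‖ := by
  rcases hb.eq_or_lt with rfl | hb
  · simp [mul_comm]
  have hb' : 0 < (b : ℂ).re := by simpa using hb
  have hzb' : 0 < (z + b).re := by simpa using by linarith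
  have hΓb := Real.Gamma_pos_of_pos hb
  have hΓzb := Real.Gamma_pos_of_pos (add_pos hz hb)
  have hbeta := norm_betaIntegral_le hz hb'
  rw [betaIntegral_eq_Gamma_mul_div z b hz hb', norm_div, norm_mul, Complex.Gamma_ofReal,
    Complex.norm_of_nonneg hΓb.le, Complex.ofReal_re, ProbabilityTheory.beta,
    div_le_div_iff₀ (norm_pos_iff.mpr (Gamma_ne_zero_of_re_pos hzb')) hΓzb] at hbeta
  refine le_of_mul_le_mul_right ?_ hΓb
  linarith

lemma norm_Gamma_one_half_add_mul_I_sq (y : ℝ) :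
    ‖Gamma (1 / 2 + y * I)‖ ^ 2 = π / Real.cosh (π * y) := by
  have hconj : 1 - (1 / 2 + y * I) = conj (1 / 2 + y * I : ℂ) := by
    apply Complex.ext <;> norm_num
  have hrefl := Complex.Gamma_mul_Gamma_one_sub (1 / 2 + y * I)
  rw [hconj, Complex.Gamma_conj, Complex.mul_conj, Complex.normSq_eq_norm_sq,
    show (π : ℂ) * (1 / 2 + y * I) = (π * y : ℝ) * I + π / 2 by push_cast; ring,
    Complex.sin_add_pi_div_two, Complex.cos_mul_I, ← Complex.ofReal_cosh] at hrefl
  exact_mod_cast hrefl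

lemma Gamma_re_mul_exp_le_norm_Gamma {z : ℂ} (hz : 1 / 2 ≤ z.re) :
    Real.Gamma z.re * Real.exp (-(π / 2) * |z.im|) ≤ ‖Gamma z‖ := by
  have : 0 ≤ Real.Gamma z.re := (Real.Gamma_pos_of_pos (by linarith)).le
  have hcosh : Real.cosh (π * z.im) ≤ Real.exp (π * |z.im|) := by
    rw [← Real.cosh_abs, abs_mul, abs_of_pos Real.pi_pos, ← Real.cosh_add_sinh]
    linarith [Real.sinh_nonneg_iff.mpr (mul_nonneg Real.pi_pos.le (abs_nonneg z.im))]
  have hline : √π * Real.exp (-(π / 2) * |z.im|) ≤ ‖Gamma (1 / 2 + z.im * I)‖ := by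
    refine le_of_sq_le_sq ?_ (norm_nonneg _)
    calc (√π * Real.exp (-(π / 2) * |z.im|)) ^ 2 = π / Real.exp (π * |z.im|) := by
          rw [mul_pow, Real.sq_sqrt Real.pi_pos.le, ← Real.exp_nat_mul,
            div_eq_mul_inv π (Real.exp _), ← Real.exp_neg]
          ring_nf
      _ ≤ π / Real.cosh (π * z.im) := by gcongr
      _ = ‖Gamma (1 / 2 + z.im * I)‖ ^ 2 := (norm_Gamma_one_half_add_mul_I_sq _).symm
  have hmono := norm_Gamma_mul_Gamma_re_add_le (z := 1 / 2 + z.im * I) (b := z.re - 1 / 2)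
    (by simp) (by linarith)
  rw [show (1 / 2 + z.im * I : ℂ) + (z.re - 1 / 2 : ℝ) = z by
      apply Complex.ext <;> simp,
    show (1 / 2 + z.im * I : ℂ).re = 1 / 2 by simp, add_sub_cancel, Real.Gamma_one_half_eq] at hmono
  have hπ : 0 < √π := Real.sqrt_pos.mpr Real.pi_pos
  refine le_of_mul_le_mul_left ?_ hπ
  calc √π * (Real.Gamma z.re * Real.exp (-(π / 2) * |z.im|))
      = √π * Real.exp (-(π / 2) * |z.im|) * Real.Gamma z.re := by ring
    _ ≤ ‖Gamma (1 / 2 + z.im * I)‖ * Real.Gamma z.re := by gcongr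
    _ ≤ √π * ‖Gamma z‖ := hmono

lemma norm_Gammaℝ (s : ℂ) : ‖Gammaℝ s‖ = π ^ (-s.re / 2) * ‖Gamma (s / 2)‖ := by
  rw [Gammaℝ_def, norm_mul, Complex.norm_cpow_eq_rpow_re_of_pos Real.pi_pos]
  simp

lemma norm_Gammaℝ_re_mul_exp_le {s : ℂ} (hs : 1 ≤ s.re) :
    ‖Gammaℝ s.re‖ * Real.exp (-(π / 4) * |s.im|) ≤ ‖Gammaℝ s‖ := by
  have hre : (s / 2).re = s.re / 2 := by simp
  have him : |(s / 2).im| = |s.im| / 2 := by simp [abs_div]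
  have hΓ := Gamma_re_mul_exp_le_norm_Gamma (z := s / 2) (by rw [hre]; linarith)
  have hreal : ‖Gamma ((s.re : ℂ) / 2)‖ = Real.Gamma (s.re / 2) := by
    rw [← Complex.ofReal_ofNat, ← Complex.ofReal_div, Complex.Gamma_ofReal,
      Complex.norm_of_nonneg (Real.Gamma_pos_of_pos (by linarith)).le]
  rw [hre, him, show -(π / 2) * (|s.im| / 2) = -(π / 4) * |s.im| by ring] at hΓ
  rw [norm_Gammaℝ, norm_Gammaℝ, Complex.ofReal_re, hreal, mul_assoc]
  gcongr

lemma norm_Gammaℝ_le_of_four_le_re {s : ℂ} {b : ℝ} (hs : 4 ≤ s.re) (hb : 0 ≤ b) :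
    ‖Gammaℝ s‖ ≤ π ^ (b / 2) * ‖Gammaℝ (s + b)‖ := by
  have hre : (s / 2).re = s.re / 2 := by simp
  have hΓ_mono : Real.Gamma (s.re / 2) ≤ Real.Gamma (s.re / 2 + b / 2) :=
    Real.Gamma_strictMonoOn_Ici.monotoneOn (Set.mem_Ici.mpr (by linarith))
      (Set.mem_Ici.mpr (by linarith)) (by linarith)
  have hΓ_pos : 0 < Real.Gamma (s.re / 2) := Real.Gamma_pos_of_pos (by linarith)
  have hΓ : ‖Gamma (s / 2)‖ ≤ ‖Gamma ((s + b) / 2)‖ := by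
    have hmono := norm_Gamma_mul_Gamma_re_add_le (z := s / 2) (b := b / 2)
      (by rw [hre]; linarith) (by linarith)
    rw [hre, Complex.ofReal_div, Complex.ofReal_ofNat, ← add_div s] at hmono
    refine le_of_mul_le_mul_left ?_ hΓ_pos
    calc Real.Gamma (s.re / 2) * ‖Gamma (s / 2)‖
        ≤ ‖Gamma (s / 2)‖ * Real.Gamma (s.re / 2 + b / 2) := by rw [mul_comm]; gcongr
      _ ≤ _ := hmono
  rw [norm_Gammaℝ, norm_Gammaℝ, ← mul_assoc, ← Real.rpow_add Real.pi_pos]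
  have hexp : b / 2 + -(s + b).re / 2 = -s.re / 2 := by
    rw [add_re, ofReal_re]
    ring
  rw [hexp]
  gcongr

/-! ### The function `χ` -/

lemma exists_norm_mellin_le {E : Type*} [NormedAddCommGroup E] [NormedSpace ℂ E]
    {f : ℝ → E} {a b : ℝ} (ha : MellinConvergent f a) (hb : MellinConvergent f b) :
    ∃ K, ∀ s : ℂ, a ≤ s.re → s.re ≤ b → ‖mellin f s‖ ≤ K := by
  refine ⟨_, fun s has hsb ↦ MeasureTheory.norm_integral_le_of_norm_le (ha.norm.add hb.norm) ?_⟩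
  filter_upwards [MeasureTheory.ae_restrict_mem measurableSet_Ioi] with t (ht : 0 < t)
  simp only [Pi.add_apply, norm_smul, Complex.norm_cpow_eq_rpow_re_of_pos ht, sub_re, one_re,
    ofReal_re]
  rw [← add_mul]
  gcongr
  rcases le_total t 1 with ht1 | ht1
  · exact (Real.rpow_le_rpow_of_exponent_ge ht ht1 (by linarith)).trans
      (le_add_of_nonneg_right (by positivity))
  · exact (Real.rpow_le_rpow_of_exponent_le ht1 (by linarith)).trans
      (le_add_of_nonneg_left (by positivity))

lemma exists_norm_completedRiemannZeta₀_le (a b : ℝ) :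
    ∃ K, ∀ s : ℂ, a ≤ s.re → s.re ≤ b → ‖completedRiemannZeta₀ s‖ ≤ K := by
  have hconv (s : ℂ) : MellinConvergent (HurwitzZeta.hurwitzEvenFEPair 0).f_modif s :=
    ((HurwitzZeta.hurwitzEvenFEPair 0).isStrongFEPair_toStrongFEPair.hasMellin s).1
  obtain ⟨K, hK⟩ := exists_norm_mellin_le (hconv (a / 2 : ℝ)) (hconv (b / 2 : ℝ))
  refine ⟨K / 2, fun s has hsb ↦ ?_⟩
  rw [completedRiemannZeta₀, HurwitzZeta.completedHurwitzZetaEven₀, norm_div, Complex.norm_ofNat]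
  gcongr
  exact hK (s / 2) (by simpa using by linarith) (by simpa using by linarith)

lemma Gammaℝ_conj (s : ℂ) : Gammaℝ (conj s) = conj (Gammaℝ s) := by
  have hpi : (π : ℂ).arg ≠ π := by
    rw [Complex.arg_ofReal_of_nonneg Real.pi_pos.le]
    exact Real.pi_pos.ne
  have hcpow := Complex.cpow_conj (π : ℂ) (-s / 2) hpi
  have hGamma := Complex.Gamma_conj (s / 2)
  simp only [map_div₀, map_neg, Complex.conj_ofNat, Complex.conj_ofReal] at hcpow hGamma
  rw [Gammaℝ_def, Gammaℝ_def, map_mul, hcpow, hGamma]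

lemma chi_one_sub (s : ℂ) : chi (1 - s) = chi s := by
  simp only [chi, completedRiemannZeta₀_one_sub]
  ring

lemma chi_one : chi 1 = 1 := by simp [chi]

lemma chi_eq_mul_Gammaℝ_mul_riemannZeta {s : ℂ} (hs : 0 < s.re) (hs1 : s ≠ 1) :
    chi s = s * (s - 1) * (Gammaℝ s * riemannZeta s) := by
  have hs0 : s ≠ 0 := by rintro rfl; simp at hs
  have hs1' : 1 - s ≠ 0 := sub_ne_zero.mpr hs1.symm
  rw [riemannZeta_def_of_ne_zero hs0, mul_div_cancel₀ _ (Gammaℝ_ne_zero_of_re_pos hs),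
    completedRiemannZeta_eq, chi]
  field_simp
  ring

lemma norm_chi_eq_of_one_lt_re {s : ℂ} (hs : 1 < s.re) :
    ‖chi s‖ = ‖s‖ * ‖s - 1‖ * (‖Gammaℝ s‖ * ‖riemannZeta s‖) := by
  have hs1 : s ≠ 1 := by rintro rfl; simp at hs
  rw [chi_eq_mul_Gammaℝ_mul_riemannZeta (by linarith) hs1, norm_mul, norm_mul, norm_mul]

lemma chi_ne_zero_of_one_le_re {s : ℂ} (hs : 1 ≤ s.re) : chi s ≠ 0 := by
  rcases eq_or_ne s 1 with rfl | hs1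
  · simp [chi_one]
  have hs0 : 0 < s.re := by linarith
  rw [chi_eq_mul_Gammaℝ_mul_riemannZeta hs0 hs1]
  exact mul_ne_zero (mul_ne_zero (ne_zero_of_re_pos hs0) (sub_ne_zero.mpr hs1))
    (mul_ne_zero (Gammaℝ_ne_zero_of_re_pos hs0) (riemannZeta_ne_zero_of_one_le_re hs))

lemma chi_conj (s : ℂ) : chi (conj s) = conj (chi s) := by
  have hright {s : ℂ} (hs : 0 < s.re) : chi (conj s) = conj (chi s) := by
    rcases eq_or_ne s 1 with rfl | hs1
    · simp [chi_one]
    have hs1' : conj s ≠ 1 := fun h ↦ hs1 (by simpa using congrArg conj h)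
    rw [chi_eq_mul_Gammaℝ_mul_riemannZeta hs hs1,
      chi_eq_mul_Gammaℝ_mul_riemannZeta (by simpa using hs) hs1', Gammaℝ_conj, riemannZeta_conj]
    simp only [map_mul, map_sub, map_one]
  rcases lt_or_ge 0 s.re with hs | hs
  · exact hright hs
  · have hreflect := hright (s := 1 - s) (by simpa using by linarith)
    rwa [map_sub, map_one, chi_one_sub, chi_one_sub] at hreflect

lemma differentiable_chi : Differentiable ℂ chi := by
  have := differentiable_completedZeta₀
  unfold chi
  fun_prop

lemma norm_chi_sub_eq_norm_chi_add {z : ℂ} (hz : z.re = 1 / 2) (a : ℝ) :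
    ‖chi (z - a)‖ = ‖chi (z + a)‖ := by
  have hreflect : 1 - (z - a) = conj (z + a) := by
    apply Complex.ext
    · simp only [sub_re, one_re, conj_re, add_re, ofReal_re, hz]
      ring
    · simp
  rw [← chi_one_sub, hreflect, chi_conj, Complex.norm_conj]

lemma exists_norm_chi_le (a b : ℝ) :
    ∃ K, ∀ s : ℂ, a ≤ s.re → s.re ≤ b → ‖chi s‖ ≤ K * Real.exp (2 * |s.im|) := by
  obtain ⟨K, hK⟩ := exists_norm_completedRiemannZeta₀_le a b
  refine ⟨(|a| + |b| + 2) ^ 2 * K + 1, fun s has hsb ↦ ?_⟩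
  have hre : |s.re| ≤ |a| + |b| := by
    rw [abs_le]
    constructor <;> linarith [neg_abs_le a, abs_nonneg a, abs_nonneg b, le_abs_self b]
  have hexp : 1 ≤ Real.exp |s.im| := Real.one_le_exp (abs_nonneg _)
  have hlinear : |a| + |b| + 1 + |s.im| ≤ (|a| + |b| + 2) * Real.exp |s.im| := by
    nlinarith [Real.add_one_le_exp |s.im|, abs_nonneg a, abs_nonneg b]
  have hs : ‖s‖ ≤ (|a| + |b| + 2) * Real.exp |s.im| := by
    linarith [Complex.norm_le_abs_re_add_abs_im s]
  have hs1 : ‖s - 1‖ ≤ (|a| + |b| + 2) * Real.exp |s.im| := by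
    have := norm_sub_le s 1
    rw [norm_one] at this
    linarith [Complex.norm_le_abs_re_add_abs_im s]
  have hexp_sq : Real.exp |s.im| * Real.exp |s.im| = Real.exp (2 * |s.im|) := by
    rw [← Real.exp_add, two_mul]
  calc ‖chi s‖ ≤ ‖s‖ * ‖s - 1‖ * ‖completedRiemannZeta₀ s‖ + 1 := by
        rw [chi, ← norm_mul, ← norm_mul, ← norm_one (α := ℂ)]
        exact norm_add_le _ _
    _ ≤ (|a| + |b| + 2) * Real.exp |s.im| * ((|a| + |b| + 2) * Real.exp |s.im|) * K
          + Real.exp |s.im| * Real.exp |s.im| := by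
        gcongr
        · exact hK s has hsb
        · exact one_le_mul_of_one_le_of_one_le hexp hexp
    _ = ((|a| + |b| + 2) ^ 2 * K + 1) * Real.exp (2 * |s.im|) := by rw [← hexp_sq]; ring

lemma norm_chi_re_mul_exp_le {w : ℂ} (hw : 1 < w.re) :
    ‖chi w.re‖ * Real.exp (-(π / 4) * |w.im|) ≤ ‖riemannZeta w.re‖ ^ 2 * ‖chi w‖ := by
  have hnorm : ‖(w.re : ℂ)‖ ≤ ‖w‖ := by simpa using Complex.abs_re_le_norm w
  have hnorm_sub : ‖(w.re : ℂ) - 1‖ ≤ ‖w - 1‖ := by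
    rw [← Complex.ofReal_one, ← Complex.ofReal_sub, Complex.norm_real]
    simpa using Complex.abs_re_le_norm (w - 1)
  have hzeta : ‖riemannZeta w.re‖ ≤ ‖riemannZeta w.re‖ ^ 2 * ‖riemannZeta w‖ := by
    rw [pow_two, mul_assoc]
    exact le_mul_of_one_le_right (norm_nonneg _) (one_le_norm_riemannZeta_mul hw le_rfl)
  rw [norm_chi_eq_of_one_lt_re hw, norm_chi_eq_of_one_lt_re (by simpa using hw)]
  calc ‖(w.re : ℂ)‖ * ‖(w.re : ℂ) - 1‖ * (‖Gammaℝ w.re‖ * ‖riemannZeta w.re‖)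
        * Real.exp (-(π / 4) * |w.im|)
      = ‖(w.re : ℂ)‖ * ‖(w.re : ℂ) - 1‖
        * (‖Gammaℝ w.re‖ * Real.exp (-(π / 4) * |w.im|) * ‖riemannZeta w.re‖) := by ring
    _ ≤ ‖w‖ * ‖w - 1‖ * (‖Gammaℝ w‖ * (‖riemannZeta w.re‖ ^ 2 * ‖riemannZeta w‖)) := by
        gcongr
        exact norm_Gammaℝ_re_mul_exp_le hw.le
    _ = ‖riemannZeta w.re‖ ^ 2 * (‖w‖ * ‖w - 1‖ * (‖Gammaℝ w‖ * ‖riemannZeta w‖)) := by ring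

lemma exists_norm_inv_chi_le {a b : ℝ} (ha : 1 < a) :
    ∃ K, ∀ w : ℂ, a ≤ w.re → w.re ≤ b → ‖(chi w)⁻¹‖ ≤ K * Real.exp (π / 4 * |w.im|) := by
  have hcont : ContinuousOn (fun x : ℝ ↦ riemannZeta x ^ 2 / chi x) (Set.Icc a b) := by
    intro x hx
    have hx1 : 1 < x := ha.trans_le hx.1
    have hzeta : ContinuousAt riemannZeta x :=
      (differentiableAt_riemannZeta (by exact_mod_cast hx1.ne')).continuousAt
    have hchi : ContinuousAt chi x := differentiable_chi.continuous.continuousAt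
    have hx_ofReal := Complex.continuous_ofReal.continuousAt (x := x)
    exact (((hzeta.comp hx_ofReal).pow 2).div (hchi.comp hx_ofReal)
      (chi_ne_zero_of_one_le_re (by simpa using hx1.le))).continuousWithinAt
  obtain ⟨K, hK⟩ := isCompact_Icc.exists_bound_of_continuousOn hcont
  refine ⟨K, fun w haw hwb ↦ ?_⟩
  have hw : 1 < w.re := ha.trans_le haw
  have hchi : 0 < ‖chi w‖ := norm_pos_iff.mpr (chi_ne_zero_of_one_le_re hw.le)
  have hchi_re : 0 < ‖chi w.re‖ :=
    norm_pos_iff.mpr (chi_ne_zero_of_one_le_re (by simpa using hw.le))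
  have hlower := norm_chi_re_mul_exp_le hw
  rw [neg_mul, Real.exp_neg, ← div_eq_mul_inv, div_le_iff₀ (Real.exp_pos _)] at hlower
  calc ‖(chi w)⁻¹‖ ≤ ‖riemannZeta w.re ^ 2 / chi w.re‖ * Real.exp (π / 4 * |w.im|) := by
        rw [norm_inv, norm_div, norm_pow, inv_le_iff_one_le_mul₀ hchi, div_mul_eq_mul_div,
          div_mul_eq_mul_div, one_le_div hchi_re]
        linarith
    _ ≤ K * Real.exp (π / 4 * |w.im|) := by
        gcongr
        exact hK w.re ⟨haw, hwb⟩

/-! ### Comparison of `χ (w - 1)` with `χ w` -/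

lemma norm_le_on_vertical_strip_of_norm_le_exp {E : Type*} [NormedAddCommGroup E]
    [NormedSpace ℂ E] {f : ℂ → E} {a b c C K : ℝ} (hab : a < b)
    (hf : DiffContOnCl ℂ f (re ⁻¹' Set.Ioo a b))
    (hgrowth : ∀ z : ℂ, a < z.re → z.re < b → ‖f z‖ ≤ K * Real.exp (c * |z.im|))
    (hleft : ∀ z : ℂ, z.re = a → ‖f z‖ ≤ C) (hright : ∀ z : ℂ, z.re = b → ‖f z‖ ≤ C)
    {z : ℂ} (haz : a ≤ z.re) (hzb : z.re ≤ b) : ‖f z‖ ≤ C := by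
  set ν := π / (b - a) / 2 with hν
  have hν_pos : 0 < ν := by have := sub_pos.mpr hab; positivity
  refine PhragmenLindelof.vertical_strip hf ⟨ν, half_lt_self (by linarith), |c| / ν, ?_⟩
    hleft hright haz hzb
  refine Asymptotics.IsBigO.of_bound |K| ?_
  filter_upwards [Filter.mem_inf_of_right (Filter.mem_principal_self _)] with w hw
  have hdouble : c * |w.im| ≤ |c| / ν * Real.exp (ν * |w.im|) :=
    calc c * |w.im| ≤ |c| * |w.im| := by gcongr; exact le_abs_self c
      _ = |c| / ν * (ν * |w.im|) := by field_simp
      _ ≤ |c| / ν * Real.exp (ν * |w.im|) := by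
        gcongr
        linarith [Real.add_one_le_exp (ν * |w.im|)]
  calc ‖f w‖ ≤ K * Real.exp (c * |w.im|) := hgrowth w hw.1 hw.2
    _ ≤ |K| * ‖Real.exp (|c| / ν * Real.exp (ν * |w.im|))‖ := by
      rw [Real.norm_eq_abs, Real.abs_exp]
      gcongr
      exact le_abs_self K

lemma norm_sub_ofReal_le_norm_add_ofReal {z : ℂ} {a : ℝ} (hz : 0 ≤ z.re) (ha : 0 ≤ a) :
    ‖z - a‖ ≤ ‖z + a‖ := by
  rw [← sq_le_sq₀ (norm_nonneg _) (norm_nonneg _), ← normSq_eq_norm_sq, ← normSq_eq_norm_sq,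
    normSq_apply, normSq_apply]
  simp only [sub_re, sub_im, add_re, add_im, ofReal_re, ofReal_im, sub_zero, add_zero]
  nlinarith [mul_nonneg hz ha]

lemma norm_chi_sub_le_of_four_add_le_re {z : ℂ} {a : ℝ} (ha : 0 ≤ a) (hz : 4 + a ≤ z.re) :
    ‖chi (z - a)‖ ≤ π ^ a * ‖riemannZeta 2‖ ^ 2 * ‖chi (z + a)‖ := by
  have hz_norm : ‖z - a‖ ≤ ‖z + a‖ := norm_sub_ofReal_le_norm_add_ofReal (by linarith) ha
  have hz_norm_sub_one : ‖z - a - 1‖ ≤ ‖z + a - 1‖ := by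
    rw [sub_right_comm, add_sub_right_comm]
    exact norm_sub_ofReal_le_norm_add_ofReal (by simpa using by linarith) ha
  have hGamma : ‖Gammaℝ (z - a)‖ ≤ π ^ a * ‖Gammaℝ (z + a)‖ := by
    have h := norm_Gammaℝ_le_of_four_le_re (s := z - a) (b := 2 * a) (by simpa using by linarith)
      (by linarith)
    convert h using 3
    · ring
    · congr 1
      push_cast
      ring
  have hzeta_sub : ‖riemannZeta (z - a)‖ ≤ ‖riemannZeta 2‖ := by
    simpa using norm_riemannZeta_le_norm_riemannZeta (x := 2) (w := z - a) (by norm_num)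
      (by simpa using by linarith)
  have hzeta_add : 1 ≤ ‖riemannZeta 2‖ * ‖riemannZeta (z + a)‖ := by
    simpa using one_le_norm_riemannZeta_mul (x := 2) (w := z + a) (by norm_num)
      (by simpa using by linarith)
  have hzeta : ‖riemannZeta (z - a)‖ ≤ ‖riemannZeta 2‖ ^ 2 * ‖riemannZeta (z + a)‖ := by
    rw [pow_two, mul_assoc]
    exact hzeta_sub.trans (le_mul_of_one_le_right (norm_nonneg _) hzeta_add)
  rw [norm_chi_eq_of_one_lt_re (s := z - a) (by simpa using by linarith),
    norm_chi_eq_of_one_lt_re (s := z + a) (by simpa using by linarith)]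
  calc ‖z - a‖ * ‖z - a - 1‖ * (‖Gammaℝ (z - a)‖ * ‖riemannZeta (z - a)‖)
      ≤ ‖z + a‖ * ‖z + a - 1‖ * (π ^ a * ‖Gammaℝ (z + a)‖
          * (‖riemannZeta 2‖ ^ 2 * ‖riemannZeta (z + a)‖)) := by gcongr
    _ = _ := by ring

lemma one_le_pi_rpow_mul_norm_riemannZeta_two_sq {a : ℝ} (ha : 0 ≤ a) :
    1 ≤ π ^ a * ‖riemannZeta 2‖ ^ 2 := by
  have hzeta : 1 ≤ ‖riemannZeta 2‖ * ‖riemannZeta 2‖ := by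
    simpa using one_le_norm_riemannZeta_mul (x := 2) (w := 2) (by norm_num) (by simp)
  rw [pow_two]
  exact one_le_mul_of_one_le_of_one_le
    (Real.one_le_rpow (by linarith [Real.pi_gt_three]) ha) hzeta

lemma exists_norm_chi_div_chi_le {a : ℝ} (ha : 1 / 2 < a) (b : ℝ) :
    ∃ K, ∀ z : ℂ, 1 / 2 ≤ z.re → z.re ≤ b →
      ‖chi (z - a) / chi (z + a)‖ ≤ K * Real.exp ((2 + π / 4) * |z.im|) := by
  obtain ⟨K₁, hK₁⟩ := exists_norm_chi_le (1 / 2 - a) (b - a)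
  obtain ⟨K₂, hK₂⟩ := exists_norm_inv_chi_le (a := 1 / 2 + a) (b := b + a) (by linarith)
  refine ⟨K₁ * K₂, fun z hz hzb ↦ ?_⟩
  have hnum : ‖chi (z - a)‖ ≤ K₁ * Real.exp (2 * |z.im|) := by
    simpa using hK₁ (z - a) (by simpa using hz) (by simpa using hzb)
  have hden : ‖(chi (z + a))⁻¹‖ ≤ K₂ * Real.exp (π / 4 * |z.im|) := by
    simpa using hK₂ (z + a) (by simpa using hz) (by simpa using hzb)
  calc ‖chi (z - a) / chi (z + a)‖ = ‖chi (z - a)‖ * ‖(chi (z + a))⁻¹‖ := by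
        rw [div_eq_mul_inv, norm_mul]
    _ ≤ K₁ * Real.exp (2 * |z.im|) * (K₂ * Real.exp (π / 4 * |z.im|)) :=
        mul_le_mul hnum hden (norm_nonneg _) ((norm_nonneg _).trans hnum)
    _ = K₁ * K₂ * Real.exp ((2 + π / 4) * |z.im|) := by rw [add_mul, Real.exp_add]; ring

lemma norm_chi_sub_le_of_one_half_lt {z : ℂ} {a : ℝ} (ha : 1 / 2 < a) (hz : 1 / 2 ≤ z.re) :
    ‖chi (z - a)‖ ≤ π ^ a * ‖riemannZeta 2‖ ^ 2 * ‖chi (z + a)‖ := by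
  rcases le_total (4 + a) z.re with hz_large | hz_small
  · exact norm_chi_sub_le_of_four_add_le_re (by linarith) hz_large
  have hne {w : ℂ} (hw : 1 / 2 ≤ w.re) : chi (w + a) ≠ 0 :=
    chi_ne_zero_of_one_le_re (by simpa using by linarith)
  have hdiff : DiffContOnCl ℂ (fun w ↦ chi (w - a) / chi (w + a))
      (re ⁻¹' Set.Ioo (1 / 2) (4 + a)) := by
    refine DifferentiableOn.diffContOnCl fun w hw ↦ ?_
    rw [closure_preimage_re, closure_Ioo (by linarith)] at hw
    have := differentiable_chi
    exact DifferentiableAt.differentiableWithinAt (by fun_prop (disch := exact hne hw.1))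
  obtain ⟨K, hK⟩ := exists_norm_chi_div_chi_le ha (4 + a)
  have hbound := norm_le_on_vertical_strip_of_norm_le_exp
    (C := π ^ a * ‖riemannZeta 2‖ ^ 2) (by linarith) hdiff
    (fun w hw hw' ↦ hK w hw.le hw'.le)
    (fun w hw ↦ ?left) (fun w hw ↦ ?right) hz hz_small
  case left =>
    rw [norm_div, norm_chi_sub_eq_norm_chi_add hw, div_self (norm_ne_zero_iff.mpr (hne hw.ge))]
    exact one_le_pi_rpow_mul_norm_riemannZeta_two_sq (by linarith)
  case right =>
    rw [norm_div, div_le_iff₀ (norm_pos_iff.mpr (hne (by linarith)))]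
    exact norm_chi_sub_le_of_four_add_le_re (by linarith) hw.ge
  rwa [norm_div, div_le_iff₀ (norm_pos_iff.mpr (hne hz))] at hbound

lemma norm_chi_sub_le_of_one_half_le {z : ℂ} {a : ℝ} (ha : 1 / 2 ≤ a) (hz : 1 / 2 ≤ z.re) :
    ‖chi (z - a)‖ ≤ π ^ a * ‖riemannZeta 2‖ ^ 2 * ‖chi (z + a)‖ := by
  have hchi := differentiable_chi.continuous
  have hpow : Continuous fun x : ℝ ↦ π ^ x := Real.continuous_const_rpow Real.pi_ne_zero
  refine le_on_closure (s := Set.Ioi (1 / 2)) (f := fun x : ℝ ↦ ‖chi (z - x)‖)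
    (g := fun x : ℝ ↦ π ^ x * ‖riemannZeta 2‖ ^ 2 * ‖chi (z + x)‖)
    (fun x hx ↦ norm_chi_sub_le_of_one_half_lt hx hz) ?_ ?_ (by simpa using ha)
  all_goals exact Continuous.continuousOn (by fun_prop)

lemma norm_chi_sub_one_le {w : ℂ} (hw : 1 ≤ w.re) :
    ‖chi (w - 1)‖ ≤ √π * ‖riemannZeta 2‖ ^ 2 * ‖chi w‖ := by
  have h := norm_chi_sub_le_of_one_half_le (z := w - 1 / 2) le_rfl (by simpa using by linarith)
  convert h using 3
  · push_cast
    ring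
  · rw [Real.sqrt_eq_rpow]
  · congr 1
    push_cast
    ring

/-! ### Zeros of `f1` -/

lemma norm_cubic_le_of_f1_eq_zero {s : ℂ} {M : ℝ} (hs1 : s ≠ 1)
    (hM_add : ‖chi s‖ ≤ M * ‖chi (s + 1)‖) (hM_mul : ‖chi (3 * s - 1)‖ ≤ M * ‖chi (3 * s)‖)
    (hchi_add : chi (s + 1) ≠ 0) (hchi_mul : chi (3 * s) ≠ 0) (hf : f1 s = 0) :
    ‖s - 1‖ * ‖3 * s - 2‖ * ‖A * s - A + 1‖ ≤
      M ^ 2 * (‖s + 1‖ * ‖s - 2‖) + 2 * M * (‖s - 1‖ * ‖s - 2‖) := by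
  have hbalance : (s - 1) * (3 * s - 2) * (A * s - A + 1) * chi (s + 1) * chi (3 * s) =
      (s + 1) * (s - 2) * chi s * chi (3 * s - 1)
        + 2 * (s - 1) * (s - 2) * chi s * chi (3 * s) := by
    linear_combination (mul_eq_zero.mp hf).resolve_left (sub_ne_zero.mpr hs1)
  have hchi_pos : 0 < ‖chi (s + 1)‖ * ‖chi (3 * s)‖ :=
    mul_pos (norm_pos_iff.mpr hchi_add) (norm_pos_iff.mpr hchi_mul)
  refine le_of_mul_le_mul_right ?_ hchi_pos
  calc ‖s - 1‖ * ‖3 * s - 2‖ * ‖A * s - A + 1‖ * (‖chi (s + 1)‖ * ‖chi (3 * s)‖)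
      = ‖(s - 1) * (3 * s - 2) * (A * s - A + 1) * chi (s + 1) * chi (3 * s)‖ := by
        simp only [norm_mul, mul_assoc]
    _ ≤ ‖s + 1‖ * ‖s - 2‖ * ‖chi s‖ * ‖chi (3 * s - 1)‖
          + 2 * ‖s - 1‖ * ‖s - 2‖ * ‖chi s‖ * ‖chi (3 * s)‖ := by
        rw [hbalance]
        refine (norm_add_le _ _).trans_eq ?_
        simp only [norm_mul, Complex.norm_ofNat]
    _ ≤ ‖s + 1‖ * ‖s - 2‖ * (M * ‖chi (s + 1)‖) * (M * ‖chi (3 * s)‖)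
          + 2 * ‖s - 1‖ * ‖s - 2‖ * (M * ‖chi (s + 1)‖) * ‖chi (3 * s)‖ := by
        have := (norm_nonneg _).trans hM_add
        gcongr
    _ = _ := by ring

lemma mul_norm_le_of_cubic_le_quadratic {α p q : ℝ} (hα : 0 ≤ α) (hp : 0 ≤ p) (hq : 0 ≤ q) {s : ℂ}
    (hs : 4 ≤ ‖s‖) (h : ‖s - 1‖ * ‖3 * s - 2‖ * ‖α * s - α + 1‖ ≤
      p * (‖s + 1‖ * ‖s - 2‖) + q * (‖s - 1‖ * ‖s - 2‖)) :
    α * ‖s‖ ≤ 1 + α + 8 * (p + q) := by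
  rcases le_or_gt (α * ‖s‖) (1 + α) with hsmall | hlarge
  · linarith
  have h1 : ‖(1 : ℂ)‖ = 1 := norm_one
  have h2 : ‖(2 : ℂ)‖ = 2 := Complex.norm_ofNat 2
  have hsub_one_ge : ‖s‖ / 2 ≤ ‖s - 1‖ := by linarith [norm_sub_norm_le s 1]
  have hsub_one_le : ‖s - 1‖ ≤ 2 * ‖s‖ := by linarith [norm_sub_le s 1]
  have hadd_one_le : ‖s + 1‖ ≤ 2 * ‖s‖ := by linarith [norm_add_le s 1]
  have hsub_two_le : ‖s - 2‖ ≤ 2 * ‖s‖ := by linarith [norm_sub_le s 2]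
  have hthree_mul_ge : ‖s‖ ≤ ‖3 * s - 2‖ := by
    have h3 : ‖3 * s‖ = 3 * ‖s‖ := by rw [norm_mul, Complex.norm_ofNat]
    linarith [norm_sub_norm_le (3 * s) 2]
  have hlinear_ge : α * ‖s‖ - (1 + α) ≤ ‖α * s - α + 1‖ := by
    have hαs : ‖(α * s : ℂ)‖ = α * ‖s‖ := by rw [norm_mul, Complex.norm_of_nonneg hα]
    have hα1 : ‖(α - 1 : ℂ)‖ ≤ 1 + α := by
      linarith [norm_sub_le (α : ℂ) 1, Complex.norm_of_nonneg hα]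
    rw [sub_add]
    linarith [norm_sub_norm_le (α * s : ℂ) (α - 1)]
  have : 0 ≤ α * ‖s‖ - (1 + α) := by linarith
  have hcompare : ‖s‖ ^ 2 / 2 * (α * ‖s‖ - (1 + α)) ≤ ‖s‖ ^ 2 / 2 * (8 * (p + q)) :=
    calc ‖s‖ ^ 2 / 2 * (α * ‖s‖ - (1 + α)) = ‖s‖ / 2 * ‖s‖ * (α * ‖s‖ - (1 + α)) := by ring
      _ ≤ ‖s - 1‖ * ‖3 * s - 2‖ * ‖α * s - α + 1‖ := by gcongr
      _ ≤ p * (‖s + 1‖ * ‖s - 2‖) + q * (‖s - 1‖ * ‖s - 2‖) := h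
      _ ≤ p * (2 * ‖s‖ * (2 * ‖s‖)) + q * (2 * ‖s‖ * (2 * ‖s‖)) := by gcongr
      _ = ‖s‖ ^ 2 / 2 * (8 * (p + q)) := by ring
  linarith [le_of_mul_le_mul_left hcompare (by positivity)]

lemma isBounded_zeros_f1_of_one_third_le_re :
    Bornology.IsBounded {s : ℂ | 1 / 3 ≤ s.re ∧ f1 s = 0} := by
  set α : ℝ := π / 3 - 1 with hα
  set M := √π * ‖riemannZeta 2‖ ^ 2
  have hα_pos : 0 < α := by linarith [Real.pi_gt_three]
  have hA : A = α := by simp [A, hα]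
  rw [isBounded_iff_forall_norm_le]
  refine ⟨max 4 ((1 + α + 8 * (M ^ 2 + 2 * M)) / α), fun s ⟨hs, hf⟩ ↦ le_max_iff.mpr ?_⟩
  refine or_iff_not_imp_left.mpr fun hs_large ↦ ?_
  rw [not_le] at hs_large
  have hs1 : s ≠ 1 := by
    rintro rfl
    norm_num at hs_large
  have hadd_re : 1 ≤ (s + 1).re := by simpa using by linarith
  have hmul_re : 1 ≤ (3 * s).re := by simpa using by linarith
  have hM_add : ‖chi s‖ ≤ M * ‖chi (s + 1)‖ := by simpa using norm_chi_sub_one_le hadd_re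
  have hcubic := norm_cubic_le_of_f1_eq_zero hs1 hM_add (norm_chi_sub_one_le hmul_re)
    (chi_ne_zero_of_one_le_re hadd_re) (chi_ne_zero_of_one_le_re hmul_re) hf
  rw [hA] at hcubic
  rw [le_div_iff₀ hα_pos, mul_comm]
  exact mul_norm_le_of_cubic_le_quadratic hα_pos.le (by positivity) (by positivity)
    hs_large.le hcubic

lemma finite_of_isBounded_of_forall_eq_zero {E : Type*} [NormedAddCommGroup E] [NormedSpace ℂ E]
    {f : ℂ → E} (hf : AnalyticOnNhd ℂ f Set.univ) {z₀ : ℂ} (hz₀ : f z₀ ≠ 0) {S : Set ℂ}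
    (hS : Bornology.IsBounded S) (hzero : ∀ s ∈ S, f s = 0) : S.Finite := by
  by_contra hinf
  obtain ⟨z, -, hz⟩ := Set.Infinite.exists_accPt_of_subset_isCompact hinf
    hS.isCompact_closure subset_closure
  have hfreq : ∃ᶠ w in 𝓝[≠] z, f w = 0 :=
    (accPt_iff_frequently_nhdsNE.mp hz).mono hzero
  exact hz₀ (hf.eqOn_zero_of_preconnected_of_frequently_eq_zero isPreconnected_univ
    (Set.mem_univ z) hfreq (Set.mem_univ z₀))

lemma differentiable_f1 : Differentiable ℂ f1 := by
  have := differentiable_chi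
  unfold f1
  fun_prop

lemma f1_two_ne_zero : f1 2 ≠ 0 := by
  have hvalue : f1 2 = 4 * (A + 1) * chi 3 * chi 6 := by
    rw [f1, show (2 : ℂ) + 1 = 3 by norm_num, show (3 : ℂ) * 2 = 6 by norm_num]
    ring
  have hA : A + 1 ≠ 0 := by simp [A, Real.pi_ne_zero]
  rw [hvalue]
  exact mul_ne_zero (mul_ne_zero (mul_ne_zero (by norm_num) hA)
    (chi_ne_zero_of_one_le_re (by norm_num))) (chi_ne_zero_of_one_le_re (by norm_num))

theorem f1_finitely_many_zeros_right_general : {s : ℂ | 1 / 3 ≤ s.re ∧ f1 s = 0}.Finite :=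
  finite_of_isBounded_of_forall_eq_zero (fun s _ ↦ differentiable_f1.analyticAt s) f1_two_ne_zero
    isBounded_zeros_f1_of_one_third_le_re fun _ hs ↦ hs.2

theorem f1_finitely_many_zeros_right :
    {s : ℂ | 1 / 3 < s.re ∧ f1 s = 0}.Finite ∧
    {s : ℂ | 1 / 2 ≤ s.re ∧ f1 s = 0}.Finite := by
  constructor <;> refine f1_finitely_many_zeros_right_general.subset fun s hs ↦ ⟨?_, hs.2⟩ <;>
    linarith [hs.1]
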